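/- Let L be a first-order language and M a finite nonempty L-structure that is idempotent and carries a SemilatticeInf instance with a top element ⊤ such that ⊓ is a compatible semilattice operation of M. Assume M contains no 2-element essentially unary subalgebra, i.e., for all u ≠ v in M such that the set {u, v} is closed under every funMap (for every n-ary function symbol g and every x : Fin n → M with x j ∈ {u, v} for all j, funMap g x ∈ {u, v}), there exist n and an L-term t : L.Term (Fin n) such that no index i satisfies: for all x : Fin n → M with x j ∈ {u, v} for all j, t.realize x = x i. Then there is an L-term s : L.Term (Fin 2) with s.realize ![x, y] = x ⊓ y for all x, y ∈ M. -/

import Mathlib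

open FirstOrder Language Structure


/-- `f x ⊓ g y` is a binary term operation. -/
def BinTerm (L : Language) {M : Type*} [L.Structure M] [SemilatticeInf M] (f g : M → M) : Prop :=
  ∃ t : L.Term (Fin 2), ∀ x y : M, t.realize ![x, y] = f x ⊓ g y

section
variable {L : Language} {M : Type*} [L.Structure M] [SemilatticeInf M]

theorem realize_idem
    (hidem : ∀ (n : ℕ) (g : L.Functions n) (a : M), funMap g (fun _ : Fin n => a) = a)
    {α : Type*} (t : L.Term α) (a : M) : t.realize (fun _ => a) = a := by
  induction t with
  | var i => rfl
  | func g ts ih =>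
    simp only [Term.realize_func, ih]
    exact hidem _ g a

theorem realize_inf_aux
    (hcompat : ∀ (n : ℕ) (g : L.Functions n) (a b : Fin n → M),
      funMap g (fun i => a i ⊓ b i) = funMap g a ⊓ funMap g b)
    {α : Type*} (t : L.Term α) (a b : α → M) :
    t.realize (a ⊓ b) = t.realize a ⊓ t.realize b := by
  induction t with
  | var i => rfl
  | func g ts ih =>
    simp only [Term.realize_func, ih]
    exact hcompat _ g _ _

theorem exists_comp (t a b : L.Term (Fin 2)) : ∃ c : L.Term (Fin 2), ∀ x y : M,
    c.realize ![x, y] = t.realize ![a.realize ![x, y], b.realize ![x, y] ] := by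
  refine ⟨t.subst ![a, b], fun x y => ?_⟩
  rw [Term.realize_subst]
  congr 1
  funext i
  fin_cases i <;> rfl

theorem BinTerm.swap {f g : M → M} (h : BinTerm L f g) : BinTerm L g f := by
  obtain ⟨t, ht⟩ := h
  obtain ⟨c, hc⟩ := exists_comp (M := M) t (Term.var 1) (Term.var 0)
  refine ⟨c, fun x y => ?_⟩
  rw [hc]
  simp [ht, inf_comm]

theorem BinTerm.inf_self
    (hidem : ∀ (n : ℕ) (g : L.Functions n) (a : M), funMap g (fun _ : Fin n => a) = a)
    {f g : M → M} (h : BinTerm L f g) (x : M) : f x ⊓ g x = x := by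
  obtain ⟨t, ht⟩ := h
  rw [← ht]
  have := realize_idem hidem t x
  convert this using 2
  funext i
  fin_cases i <;> rfl

theorem BinTerm.map_inf [OrderTop M]
    (hidem : ∀ (n : ℕ) (g : L.Functions n) (a : M), funMap g (fun _ : Fin n => a) = a)
    (hcompat : ∀ (n : ℕ) (g : L.Functions n) (a b : Fin n → M),
      funMap g (fun i => a i ⊓ b i) = funMap g a ⊓ funMap g b)
    {f g : M → M} (h : BinTerm L f g) (x y : M) : g (x ⊓ y) = g x ⊓ g y := by
  have h1 : f ⊤ = ⊤ := by
    have := h.inf_self hidem ⊤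
    exact (inf_eq_top_iff.1 this).1
  obtain ⟨t, ht⟩ := h
  have e : ∀ z, g z = t.realize ![⊤, z] := by
    intro z
    simp [ht, h1]
  rw [e, e, e, ← realize_inf_aux hcompat]
  congr 1
  funext i
  fin_cases i <;> simp

theorem BinTerm.sq [OrderTop M]
    (hidem : ∀ (n : ℕ) (g : L.Functions n) (a : M), funMap g (fun _ : Fin n => a) = a)
    (hcompat : ∀ (n : ℕ) (g : L.Functions n) (a b : Fin n → M),
      funMap g (fun i => a i ⊓ b i) = funMap g a ⊓ funMap g b)
    {f g : M → M} (h : BinTerm L f g) : BinTerm L f (g ∘ g) := by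
  have hi := h.map_inf hidem hcompat
  have hs := h.inf_self hidem
  obtain ⟨t, ht⟩ := h
  obtain ⟨c, hc⟩ := exists_comp (M := M) t (Term.var 0) t
  refine ⟨c, fun x y => ?_⟩
  have h3 : f x ≤ g (f x) := by
    conv_lhs => rw [← hs (f x)]
    exact inf_le_right
  rw [hc]
  simp [ht, hi, ← inf_assoc, inf_eq_left.2 h3]

theorem BinTerm.exists_idem [OrderTop M] [Finite M]
    (hidem : ∀ (n : ℕ) (g : L.Functions n) (a : M), funMap g (fun _ : Fin n => a) = a)
    (hcompat : ∀ (n : ℕ) (g : L.Functions n) (a b : Fin n → M),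
      funMap g (fun i => a i ⊓ b i) = funMap g a ⊓ funMap g b)
    {f g : M → M} (h : BinTerm L f g) (u : M) (hu : g u = u) :
    ∃ g' : M → M, BinTerm L f g' ∧ g' u = u ∧ ∀ x, g' (g' x) = g' x := by
  obtain ⟨g', hg'⟩ := (Set.toFinite {g' : M → M | BinTerm L f g' ∧ g' u = u}).exists_maximal
    ⟨g, h, hu⟩
  obtain ⟨h1, h2⟩ := hg'.prop
  have h3 : ∀ x, x ≤ g' x := fun x => by
    conv_lhs => rw [← h1.inf_self hidem x]
    exact inf_le_right
  refine ⟨g', h1, h2, fun x => le_antisymm ?_ (h3 _)⟩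
  exact hg'.le_of_ge (y := g' ∘ g') ⟨h1.sq hidem hcompat, by simp [h2]⟩ (fun x => h3 _) x

theorem BinTerm.exists_fix [OrderTop M] [Finite M]
    (hidem : ∀ (n : ℕ) (g : L.Functions n) (a : M), funMap g (fun _ : Fin n => a) = a)
    (hcompat : ∀ (n : ℕ) (g : L.Functions n) (a b : Fin n → M),
      funMap g (fun i => a i ⊓ b i) = funMap g a ⊓ funMap g b)
    {f g : M → M} (h : BinTerm L f g) (u : M) (hf : f u = u) (hg : g u = u) :
    ∃ k : M → M, BinTerm L id k ∧ k u = u := by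
  obtain ⟨g', h', hg', ig⟩ := h.exists_idem hidem hcompat u hg
  obtain ⟨f', h'', hf', jf⟩ := h'.swap.exists_idem hidem hcompat u hf
  have mf := h''.map_inf hidem hcompat
  have mg := h''.swap.map_inf hidem hcompat
  have hs := h''.inf_self hidem
  obtain ⟨t, ht⟩ := h''.swap
  obtain ⟨t', ht'⟩ := h''
  obtain ⟨c, hc⟩ := exists_comp (M := M) t t t'
  refine ⟨fun y => f' (g' y) ⊓ g' (f' y), ⟨c, fun x y => ?_⟩, by simp [hf', hg']⟩
  rw [hc, ht, ht, ht', mf, mg, ig, jf, id]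
  conv_rhs => rw [← hs x]
  beta_reduce
  ac_rfl

end

/-- Lemma 3.6: a finite idempotent algebra with a compatible semilattice
operation whose semilattice has a largest element and which has no 2-element essentially
unary subalgebra has ⊓ as a term operation. -/
theorem stmt_4 {L : Language} {M : Type*} [L.Structure M] [Fintype M] [Nonempty M]
    [SemilatticeInf M] [OrderTop M]
    (hidem : ∀ (n : ℕ) (g : L.Functions n) (a : M), funMap g (fun _ : Fin n => a) = a)
    (hcompat : ∀ (n : ℕ) (g : L.Functions n) (a b : Fin n → M),
      funMap g (fun i => a i ⊓ b i) = funMap g a ⊓ funMap g b)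
    (hnounary : ∀ u v : M, u ≠ v →
      (∀ (n : ℕ) (g : L.Functions n) (x : Fin n → M),
        (∀ j, x j ∈ ({u, v} : Set M)) → funMap g x ∈ ({u, v} : Set M)) →
      ∃ (n : ℕ) (t : L.Term (Fin n)), ∀ i : Fin n,
        ¬ (∀ x : Fin n → M, (∀ j, x j ∈ ({u, v} : Set M)) → t.realize x = x i)) :
    ∃ s : L.Term (Fin 2), ∀ x y : M, s.realize ![x, y] = x ⊓ y := by
  classical
  have hidem' := fun (n : ℕ) (t : L.Term (Fin n)) => realize_idem hidem t
  have hinf := fun (n : ℕ) (t : L.Term (Fin n)) => realize_inf_aux hcompat t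
  obtain ⟨h, hh⟩ := (Set.toFinite {h : M → M | BinTerm L id h}).exists_minimal
    ⟨fun _ => ⊤, Term.var 0, fun x y => by simp⟩
  have hB : BinTerm L id h := hh.prop
  have hmin : ∀ k : M → M, BinTerm L id k → h ≤ k := by
    intro k hk
    have : BinTerm L id (h ⊓ k) := by
      obtain ⟨s, hs⟩ := hB
      obtain ⟨s', hs'⟩ := hk
      obtain ⟨c, hc⟩ := exists_comp (M := M) s s' (Term.var 1)
      refine ⟨c, fun x y => ?_⟩
      rw [hc]
      simp only [hs, hs', id, Term.realize_var, Pi.inf_apply, Matrix.cons_val_one,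
        Matrix.cons_val_fin_one]
      ac_rfl
    exact (hh.le_of_le this inf_le_left).trans inf_le_right
  have hinfl : ∀ x, x ≤ h x := fun x => by
    conv_lhs => rw [← hB.inf_self hidem x]
    exact inf_le_right
  have hmono : Monotone h := fun x y hxy => by
    have := hB.map_inf hidem hcompat x y
    rw [inf_eq_left.2 hxy] at this
    rw [this]
    exact inf_le_right
  by_cases hid : ∀ x, h x = x
  · obtain ⟨s, hs⟩ := hB
    exact ⟨s, fun x y => by rw [hs, hid, id]⟩
  exfalso
  push Not at hid
  obtain ⟨u, hu⟩ := (Set.toFinite {u : M | h u ≠ u}).exists_maximal hid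
  have hu1 : h u ≠ u := hu.prop
  have hfix : ∀ w, u < w → h u ≤ w := by
    intro w hw
    have : h w = w := by
      by_contra hc
      exact hu.not_gt hc hw
    rw [← this]
    exact hmono hw.le
  have mono : ∀ (n : ℕ) (t : L.Term (Fin n)) (a b : Fin n → M), a ≤ b →
      t.realize a ≤ t.realize b := by
    intro n t a b hab
    have := hinf n t a b
    rw [inf_eq_left.2 hab] at this
    rw [this]
    exact inf_le_right
  have key : ∀ (n : ℕ) (t : L.Term (Fin n)), ∃ i : Fin n,
      ∀ x : Fin n → M, (∀ j, x j ∈ ({u, h u} : Set M)) → t.realize x = x i := by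
    intro n t
    have hdec : ∀ x : Fin n → M, t.realize x =
        Finset.univ.inf fun i => t.realize (Function.update ⊤ i (x i)) := by
      intro x
      have h1 : x = Finset.univ.inf fun i => (Function.update ⊤ i (x i) : Fin n → M) := by
        apply le_antisymm
        · refine Finset.le_inf fun i _ j => ?_
          by_cases hj : j = i
          · subst hj; simp
          · simp [hj]
        · intro j
          have := (Finset.inf_le (Finset.mem_univ j) :
            (Finset.univ.inf fun i => (Function.update ⊤ i (x i) : Fin n → M)) ≤ _) j
          simpa using this
      conv_lhs => rw [h1]
      generalize (Finset.univ : Finset (Fin n)) = S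
      induction S using Finset.induction_on with
      | empty => exact hidem' n t ⊤
      | insert a S ha ih => rw [Finset.inf_insert, Finset.inf_insert, hinf, ih]
    have hge : ∀ (i : Fin n) (z : M), z ≤ t.realize (Function.update ⊤ i z) := by
      intro i z
      conv_lhs => rw [← hidem' n t z]
      refine mono _ _ _ _ fun j => ?_
      by_cases hj : j = i
      · subst hj; simp
      · simp [hj]
    have hex : ∃ i, t.realize (Function.update ⊤ i u) = u := by
      by_contra hc
      push Not at hc
      apply hu1
      refine le_antisymm ?_ (hinfl u)
      conv_rhs => rw [← hidem' n t u, hdec]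
      exact Finset.le_inf fun i _ => hfix _ (lt_of_le_of_ne (hge i u) (hc i).symm)
    obtain ⟨i, hi⟩ := hex
    have hoth : ∀ j, j ≠ i → h u ≤ t.realize (Function.update ⊤ j u) := by
      intro j hj
      by_contra hc
      have hju : t.realize (Function.update ⊤ j u) = u := by
        by_contra hne
        exact hc (hfix _ (lt_of_le_of_ne (hge j u) (Ne.symm hne)))
      have hb : BinTerm L (fun x : M => t.realize (Function.update ⊤ i x))
          (fun y : M => t.realize (Function.update (fun _ => y) i ⊤)) := by
        refine ⟨t.subst (fun k => if k = i then Term.var 0 else Term.var 1), fun x y => ?_⟩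
        rw [Term.realize_subst, ← hinf]
        congr 1
        funext k
        by_cases hk : k = i
        · subst hk; simp
        · simp [hk]
      obtain ⟨k, hk, hku⟩ := hb.exists_fix hidem hcompat u hi (by
        apply le_antisymm
        · conv_rhs => rw [← hju]
          refine mono _ _ _ _ fun k => ?_
          by_cases hk : k = j
          · subst hk; simp [hj]
          · simp [hk]
        · conv_lhs => rw [← hidem' n t u]
          refine mono _ _ _ _ fun k => ?_
          by_cases hk : k = i
          · subst hk; simp
          · simp [hk])
      exact hu1 (le_antisymm ((hmin k hk u).trans hku.le) (hinfl u))
    refine ⟨i, fun x hx => ?_⟩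
    have hlo : ∀ j, u ≤ x j := fun j => by
      rcases hx j with e | e <;> rw [e]
      exact hinfl u
    have hhi : ∀ j, x j ≤ h u := fun j => by
      rcases hx j with e | e <;> rw [e]
      exact hinfl u
    rcases hx i with e | e
    · rw [e]
      apply le_antisymm
      · conv_rhs => rw [← hi]
        rw [hdec, ← e]
        exact Finset.inf_le (f := fun i => t.realize (Function.update ⊤ i (x i)))
          (Finset.mem_univ i)
      · conv_lhs => rw [← hidem' n t u]
        exact mono _ _ _ _ hlo
    · rw [e]
      apply le_antisymm
      · conv_rhs => rw [← hidem' n t (h u)]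
        exact mono _ _ _ _ hhi
      · rw [hdec]
        refine Finset.le_inf fun j _ => ?_
        by_cases hj : j = i
        · subst hj
          rw [e]
          exact hge _ _
        · refine (hoth j hj).trans (mono _ _ _ _ ?_)
          exact update_le_update_iff.2 ⟨hlo j, fun _ _ => le_rfl⟩
  obtain ⟨n, t, ht⟩ := hnounary u (h u) (Ne.symm hu1) (by
    intro n g x hx
    obtain ⟨i, hi⟩ := key n (Term.func g Term.var)
    have := hi x hx
    simp only [Term.realize_func, Term.realize_var] at this
    rw [this]
    exact hx i)
  obtain ⟨i, hi⟩ := key n t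
  exact ht i hi
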